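/- Fix q ∈ ℂ with |q| > 1 and let Θ(x) = ∑_{n∈ℤ} q^{-n(n-1)/2} x^n for x ≠ 0. Then Θ is differentially algebraic over ℂ(x): there exist a natural number n and a nonzero polynomial P in n+2 variables with complex coefficients such that P(x, Θ(x), Θ'(x), …, Θ^{(n)}(x)) = 0 for every x ∈ ℂ with x ≠ 0. -/

import Mathlib

/-- The Jacobi theta function `Θ(x) = ∑_{n ∈ ℤ} q^{-n(n-1)/2} x^n`. -/
noncomputable def thetaQ (q x : ℂ) : ℂ :=
  ∑' n : ℤ, q ^ (-(n * (n - 1)) / 2) * x ^ n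

/-!
Write `δ = x d/dx`. A function holomorphic on the punctured plane with `f (q x) = (q x) ^ k f x` is
determined by `k ≥ 1` consecutive Laurent coefficients, so such functions form a space of dimension
at most `k`. Any three of them are algebraically dependent: there are about `n ^ 2 / 2` monomials of
degree `n` in them, living in a space of dimension at most `k n`.

Since `Θ (q x) = q x Θ(x)`, the functions `δ² log Θ` and `δ³ log Θ` are invariant under `x ↦ q x`.
The square of the first and the second have common denominator `Θ⁴`, and together with it their
numerators form three theta functions of equal weight which are algebraically independent as
polynomials in `Θ, δ Θ, δ² Θ, δ³ Θ`. The relation between them is therefore a nontrivial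
differential equation for `Θ`.
-/

open Complex MvPolynomial Real Set Topology

section CircleAverage

variable {E : Type*} [NormedAddCommGroup E] [NormedSpace ℂ E]

theorem circleAverage_eq_of_differentiableOn_compl_singleton {c : ℂ} {f : ℂ → E}
    (hf : DifferentiableOn ℂ f {c}ᶜ) {r R : ℝ} (hr : 0 < r) (hR : 0 < R) :
    circleAverage f c r = circleAverage f c R := by
  wlog hrR : r ≤ R generalizing r R
  · exact (this hR hr (le_of_not_ge hrR)).symm
  have hne : ∀ z ∉ Metric.ball c r, z ≠ c := by
    rintro z hz rfl
    exact hz (Metric.mem_ball_self hr)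
  have hd : ∀ z ∉ Metric.ball c r, DifferentiableAt ℂ f z := fun z hz =>
    hf.differentiableAt (isOpen_compl_singleton.mem_nhds (hne z hz))
  rw [circleAverage_eq_circleIntegral hr.ne', circleAverage_eq_circleIntegral hR.ne',
    circleIntegral_sub_center_inv_smul_eq_of_differentiable_on_annulus_off_countable hr hrR
      countable_empty (fun z hz => (hd z hz.2).continuousAt.continuousWithinAt)
      (fun z hz => hd z fun h => hz.1.2 (Metric.ball_subset_closedBall h))]

theorem circleAverage_zero_norm (f : ℂ → E) (a : ℂ) :
    circleAverage f 0 ‖a‖ = circleAverage (fun z => f (a * z)) 0 1 := by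
  rw [circleAverage_eq_integral_add a.arg, circleAverage]
  congr! 4 with θ
  conv_rhs => rw [← norm_mul_exp_arg_mul_I a]
  simp only [circleMap_zero, ofReal_add, ofReal_one, add_mul, Complex.exp_add]
  ring

end CircleAverage

theorem eq_zero_of_fourierCoeff_eq_zero {T : ℝ} [Fact (0 < T)] {g : C(AddCircle T, ℂ)}
    (h : fourierCoeff g = 0) : g = 0 := by
  ext t
  have hsum := has_pointwise_sum_fourier_series_of_summable (f := g) (h ▸ summable_zero) t
  simp only [h, Pi.zero_apply, zero_smul] at hsum
  exact hsum.unique hasSum_zero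

section Fourier

local instance : Fact (0 < 2 * π) := ⟨two_pi_pos⟩

theorem circleMap_zero_eq_mul_toCircle (R θ : ℝ) :
    circleMap 0 R θ = R * (AddCircle.toCircle (θ : AddCircle (2 * π)) : ℂ) := by
  rw [circleMap_zero, AddCircle.toCircle_apply_mk, div_self two_pi_pos.ne', one_mul, Circle.coe_exp]

theorem fourierCoeff_mul_toCircle (f : ℂ → ℂ) {R : ℝ} (hR : R ≠ 0) (n : ℤ) :
    fourierCoeff (fun t : AddCircle (2 * π) => f (R * t.toCircle)) n =
      R ^ n * circleAverage (fun z => z ^ (-n) * f z) 0 R := by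
  have hR' : (R : ℂ) ≠ 0 := ofReal_ne_zero.2 hR
  rw [← smul_eq_mul ((R : ℂ) ^ n), ← circleAverage_fun_smul, circleAverage,
    fourierCoeff_eq_intervalIntegral _ n 0, zero_add, one_div]
  congr! 3 with θ
  rw [circleMap_zero_eq_mul_toCircle, fourier_apply, AddCircle.toCircle_zsmul, Circle.coe_zpow,
    smul_eq_mul, smul_eq_mul, mul_zpow, ← mul_assoc, ← mul_assoc, ← zpow_add₀ hR', add_neg_cancel,
    zpow_zero, one_mul]

theorem eqOn_zero_of_circleAverage_zpow_mul_eq_zero {f : ℂ → ℂ} {R : ℝ} (hR : 0 < R)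
    (hf : ContinuousOn f (Metric.sphere 0 R))
    (h : ∀ n : ℤ, circleAverage (fun z => z ^ n * f z) 0 R = 0) :
    EqOn f 0 (Metric.sphere 0 R) := by
  intro x hx
  let g : C(AddCircle (2 * π), ℂ) :=
    ⟨fun t => f (R * t.toCircle), hf.comp_continuous
      (continuous_const.mul (continuous_subtype_val.comp AddCircle.continuous_toCircle))
      (fun t => by simp [abs_of_pos hR, Circle.norm_coe])⟩
  have hg : g = 0 := eq_zero_of_fourierCoeff_eq_zero <| funext fun n => by
    rw [ContinuousMap.coe_mk, fourierCoeff_mul_toCircle f hR.ne', h, mul_zero, Pi.zero_apply]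
  have hgx : f (R * AddCircle.toCircle (x.arg : AddCircle (2 * π))) = 0 :=
    congrArg (fun g : C(AddCircle (2 * π), ℂ) => g x.arg) hg
  rwa [← circleMap_zero_eq_mul_toCircle, circleMap_zero, ← mem_sphere_zero_iff_norm.1 hx,
    norm_mul_exp_arg_mul_I] at hgx

end Fourier

/-- The `n`-th Laurent coefficient of a function holomorphic on the punctured plane, as an average
over the unit circle. -/
noncomputable def laurentCoeff (f : ℂ → ℂ) (n : ℤ) : ℂ :=
  circleAverage (fun z => z ^ (-n) * f z) 0 1

section LaurentCoeff

theorem sphere_zero_subset_compl_singleton {E : Type*} [NormedAddCommGroup E] {R : ℝ}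
    (hR : R ≠ 0) : Metric.sphere (0 : E) R ⊆ {0}ᶜ :=
  fun z hz => ne_zero_of_mem_sphere hR ⟨z, hz⟩

variable {f : ℂ → ℂ}

theorem circleAverage_zpow_mul (hf : DifferentiableOn ℂ f {0}ᶜ) (n : ℤ) {R : ℝ} (hR : 0 < R) :
    circleAverage (fun z => z ^ n * f z) 0 R = laurentCoeff f (-n) := by
  rw [laurentCoeff, neg_neg]
  refine circleAverage_eq_of_differentiableOn_compl_singleton (.mul (fun z hz => ?_) hf) hR one_pos
  exact (differentiableAt_zpow.2 (.inl hz)).differentiableWithinAt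

theorem eqOn_zero_of_laurentCoeff_eq_zero (hf : DifferentiableOn ℂ f {0}ᶜ)
    (h : ∀ n, laurentCoeff f n = 0) : EqOn f 0 {0}ᶜ := by
  intro x (hx : x ≠ 0)
  have hR : 0 < ‖x‖ := norm_pos_iff.2 hx
  exact eqOn_zero_of_circleAverage_zpow_mul_eq_zero hR
    (hf.continuousOn.mono (sphere_zero_subset_compl_singleton hR.ne'))
    (fun n => by rw [circleAverage_zpow_mul hf n hR, h]) (mem_sphere_zero_iff_norm.2 rfl)

theorem laurentCoeff_sum {ι : Type*} [Fintype ι] {F : ι → ℂ → ℂ}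
    (hF : ∀ i, ContinuousOn (F i) {0}ᶜ) (c : ι → ℂ) (n : ℤ) :
    laurentCoeff (fun x => ∑ i, c i * F i x) n = ∑ i, c i * laurentCoeff (F i) n := by
  have hterm : ∀ i, CircleIntegrable (fun z => c i * (z ^ (-n) * F i z)) 0 1 := fun i => by
    refine ContinuousOn.circleIntegrable one_pos.le
      (.mono ?_ (sphere_zero_subset_compl_singleton one_ne_zero))
    exact continuousOn_const.mul ((continuousOn_id.zpow₀ _ fun z hz => .inl hz).mul (hF i))
  calc laurentCoeff (fun x => ∑ i, c i * F i x) n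
    _ = circleAverage (fun z => ∑ i, c i * (z ^ (-n) * F i z)) 0 1 := by
      simp only [laurentCoeff, Finset.mul_sum, mul_left_comm]
    _ = ∑ i, circleAverage (fun z => c i * (z ^ (-n) * F i z)) 0 1 :=
      circleAverage_fun_sum fun i _ => hterm i
    _ = ∑ i, c i * laurentCoeff (F i) n :=
      Finset.sum_congr rfl fun i _ => by
        simp only [← smul_eq_mul (c i), circleAverage_fun_smul, laurentCoeff]

end LaurentCoeff

/-- A theta function of weight `k` with respect to `q`: a holomorphic function on the punctured
plane with `f (q x) = (q x) ^ k f x`. The multiplier is normalised so that `Θ` has weight `1`. -/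
structure IsThetaOfWeight (q : ℂ) (k : ℕ) (f : ℂ → ℂ) : Prop where
  differentiableOn : DifferentiableOn ℂ f {0}ᶜ
  map_mul : ∀ x ≠ 0, f (q * x) = (q * x) ^ k * f x

namespace IsThetaOfWeight

variable {q : ℂ} {k : ℕ} {f : ℂ → ℂ}

theorem pow (hf : IsThetaOfWeight q k f) (m : ℕ) :
    IsThetaOfWeight q (k * m) (fun x => f x ^ m) where
  differentiableOn := hf.differentiableOn.pow m
  map_mul x hx := by rw [hf.map_mul x hx, mul_pow, pow_mul]

theorem prod_pow {σ : Type*} [Fintype σ] {F : σ → ℂ → ℂ} (hF : ∀ i, IsThetaOfWeight q k (F i))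
    (s : σ → ℕ) : IsThetaOfWeight q (k * ∑ i, s i) (fun x => ∏ i, F i x ^ s i) where
  differentiableOn := DifferentiableOn.fun_finsetProd fun i _ => ((hF i).pow (s i)).differentiableOn
  map_mul x hx := by
    simp only [((hF _).pow _).map_mul x hx, Finset.prod_mul_distrib, Finset.prod_pow_eq_pow_sum,
      Finset.mul_sum]

theorem sum {ι : Type*} [Fintype ι] {F : ι → ℂ → ℂ} (hF : ∀ i, IsThetaOfWeight q k (F i))
    (c : ι → ℂ) : IsThetaOfWeight q k (fun x => ∑ i, c i * F i x) where
  differentiableOn := DifferentiableOn.fun_sum fun i _ => (hF i).differentiableOn.const_mul (c i)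
  map_mul x hx := by simp only [(hF _).map_mul x hx, Finset.mul_sum, mul_left_comm]

theorem laurentCoeff_eq (hf : IsThetaOfWeight q k f) (hq : q ≠ 0) (n : ℤ) :
    laurentCoeff f n = q ^ (k - n) * laurentCoeff f (n - k) := by
  rw [← neg_neg n, ← circleAverage_zpow_mul hf.differentiableOn _ (norm_pos_iff.2 hq),
    circleAverage_zero_norm, laurentCoeff, ← smul_eq_mul, ← circleAverage_fun_smul]
  refine circleAverage_congr_sphere fun z hz => ?_
  have hz : z ≠ 0 := sphere_zero_subset_compl_singleton (abs_ne_zero.2 one_ne_zero) hz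
  rw [hf.map_mul z hz, ← mul_assoc, ← zpow_natCast, ← zpow_add₀ (mul_ne_zero hq hz), smul_eq_mul,
    ← mul_assoc, mul_zpow]
  ring_nf

theorem laurentCoeff_eq_zero (hf : IsThetaOfWeight q k f) (hq : q ≠ 0) (hk : 0 < k)
    (h : ∀ i : Fin k, laurentCoeff f (i : ℕ) = 0) (n : ℤ) : laurentCoeff f n = 0 := by
  have hk' : (0 : ℤ) < k := by exact_mod_cast hk
  have hstep : Function.Periodic (fun m => laurentCoeff f m = 0) (k : ℤ) := fun m => by
    simp only [hf.laurentCoeff_eq hq (m + k), add_sub_cancel_right, mul_eq_zero,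
      zpow_ne_zero _ hq, false_or]
  have hmod : laurentCoeff f (n % k) = 0 ↔ laurentCoeff f n = 0 := by
    simpa [Int.emod_add_mul_ediv, mul_comm] using (hstep.int_mul (n / k) (n % k)).symm
  obtain ⟨m, hm⟩ := Int.eq_ofNat_of_zero_le (Int.emod_nonneg n hk'.ne')
  have hmk : m < k := by exact_mod_cast hm ▸ Int.emod_lt_of_pos n hk'
  exact hmod.1 (hm ▸ h ⟨m, hmk⟩)

theorem exists_linear_relation (hq : q ≠ 0) (hk : 0 < k) {ι : Type*} [Fintype ι] {F : ι → ℂ → ℂ}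
    (hF : ∀ i, IsThetaOfWeight q k (F i)) (hcard : k < Fintype.card ι) :
    ∃ c : ι → ℂ, c ≠ 0 ∧ ∀ x ≠ 0, ∑ i, c i * F i x = 0 := by
  let M : Matrix (Fin k) ι ℂ := .of fun j i => laurentCoeff (F i) (j : ℕ)
  have hker : LinearMap.ker M.mulVecLin ≠ ⊥ :=
    LinearMap.ker_ne_bot_of_finrank_lt (by simpa using hcard)
  obtain ⟨c, hc, hc0⟩ := Submodule.exists_mem_ne_zero_of_ne_bot hker
  refine ⟨c, hc0, fun x hx => eqOn_zero_of_laurentCoeff_eq_zero (sum hF c).differentiableOn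
    ((sum hF c).laurentCoeff_eq_zero hq hk fun j => ?_) hx⟩
  rw [laurentCoeff_sum fun i => (hF i).differentiableOn.continuousOn]
  simpa [M, Matrix.mulVec, dotProduct, mul_comm] using congrFun (LinearMap.mem_ker.1 hc) j

-- There are `(k + 1) (2 k + 1)` monomials of degree `2 k`, all of weight `2 k ^ 2`.
theorem exists_algebraic_relation (hq : q ≠ 0) (hk : 0 < k) {F : Fin 3 → ℂ → ℂ}
    (hF : ∀ i, IsThetaOfWeight q k (F i)) :
    ∃ Q : MvPolynomial (Fin 3) ℂ, Q ≠ 0 ∧ ∀ x ≠ 0, eval (fun i => F i x) Q = 0 := by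
  let S : Finset (Fin 3 →₀ ℕ) := Finset.finsuppAntidiag Finset.univ (2 * k)
  have hS : k * (2 * k) < Fintype.card S := by
    rw [Fintype.card_coe, Finset.card_finsuppAntidiag_nat_eq_choose, Finset.card_univ,
      Fintype.card_fin, show 3 + 2 * k - 1 = 2 * k + 2 by omega, Nat.choose_symm_add,
      Nat.choose_two_right, show (2 * k + 2) * (2 * k + 2 - 1) = 2 * ((k + 1) * (2 * k + 1)) by
        rw [Nat.add_sub_assoc one_le_two]; ring, Nat.mul_div_cancel_left _ two_pos]
    nlinarith
  have hdeg : ∀ s : S, ∑ i, s.1 i = 2 * k := fun s => (Finset.mem_finsuppAntidiag.1 s.2).1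
  obtain ⟨c, hc, hrel⟩ := exists_linear_relation hq (by positivity)
    (fun s : S => hdeg s ▸ prod_pow hF s.1) hS
  refine ⟨∑ s, monomial s.1 (c s), fun h0 => hc (funext fun s => ?_), fun x hx => ?_⟩
  · simpa [coeff_sum, coeff_monomial, Subtype.coe_inj] using congrArg (coeff s.1) h0
  · simpa [eval_monomial, Finsupp.prod_fintype] using hrel x hx

end IsThetaOfWeight

section EulerDeriv

variable {𝕜 : Type*} [NontriviallyNormedField 𝕜]

/-- The Euler operator `δ = x d/dx`. -/
noncomputable def eulerDeriv (f : 𝕜 → 𝕜) (x : 𝕜) : 𝕜 :=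
  x * deriv f x

/-- The Wronskian with respect to the Euler operator `δ`, that is, the numerator of
`δ (g / f) = eulerWronskian f g / f ^ 2`. -/
noncomputable def eulerWronskian (f g : 𝕜 → 𝕜) (x : 𝕜) : 𝕜 :=
  f x * eulerDeriv g x - g x * eulerDeriv f x

variable {f g : 𝕜 → 𝕜} {x : 𝕜}

theorem eulerDeriv_congr (h : f =ᶠ[𝓝 x] g) : eulerDeriv f x = eulerDeriv g x := by
  rw [eulerDeriv, eulerDeriv, h.deriv_eq]

theorem eulerDeriv_add (hf : DifferentiableAt 𝕜 f x) (hg : DifferentiableAt 𝕜 g x) :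
    eulerDeriv (fun y => f y + g y) x = eulerDeriv f x + eulerDeriv g x := by
  simp only [eulerDeriv, deriv_fun_add hf hg, mul_add]

theorem eulerDeriv_sub (hf : DifferentiableAt 𝕜 f x) (hg : DifferentiableAt 𝕜 g x) :
    eulerDeriv (fun y => f y - g y) x = eulerDeriv f x - eulerDeriv g x := by
  simp only [eulerDeriv, deriv_fun_sub hf hg, mul_sub]

theorem eulerDeriv_mul (hf : DifferentiableAt 𝕜 f x) (hg : DifferentiableAt 𝕜 g x) :
    eulerDeriv (fun y => f y * g y) x = eulerDeriv f x * g x + f x * eulerDeriv g x := by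
  simp only [eulerDeriv, deriv_fun_mul hf hg]
  ring

theorem eulerDeriv_const_mul (c : 𝕜) : eulerDeriv (fun y => c * f y) x = c * eulerDeriv f x := by
  rw [eulerDeriv, eulerDeriv, deriv_const_mul_field, mul_left_comm]

theorem eulerDeriv_pow (hf : DifferentiableAt 𝕜 f x) (n : ℕ) :
    eulerDeriv (fun y => f y ^ n) x = n * f x ^ (n - 1) * eulerDeriv f x := by
  rw [eulerDeriv, eulerDeriv, deriv_fun_pow hf, mul_left_comm]

theorem eulerDeriv_pow_id (n : ℕ) (x : 𝕜) : eulerDeriv (fun y => y ^ n) x = n * x ^ n := by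
  cases n with
  | zero => simp [eulerDeriv]
  | succ n => rw [eulerDeriv, deriv_pow_field, Nat.add_sub_cancel]; ring

theorem eulerDeriv_comp_mul_left (q : 𝕜) (f : 𝕜 → 𝕜) (x : 𝕜) :
    eulerDeriv (fun y => f (q * y)) x = eulerDeriv f (q * x) := by
  rw [eulerDeriv, eulerDeriv, deriv_comp_mul_left, smul_eq_mul]
  ring

theorem eulerDeriv_map_mul {q : 𝕜} {k : ℕ} (hg : DifferentiableAt 𝕜 g x)
    (h : ∀ᶠ y in 𝓝 x, f (q * y) = (q * y) ^ k * g y) :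
    eulerDeriv f (q * x) = (q * x) ^ k * (eulerDeriv g x + k * g x) := by
  calc eulerDeriv f (q * x)
    _ = eulerDeriv (fun y => (q * y) ^ k * g y) x := by
      rw [← eulerDeriv_comp_mul_left, eulerDeriv_congr h]
    _ = (q * x) ^ k * (eulerDeriv g x + k * g x) := by
      rw [eulerDeriv_mul (by fun_prop) hg, eulerDeriv_comp_mul_left q (fun y => y ^ k),
        eulerDeriv_pow_id]
      ring

variable [CompleteSpace 𝕜]

theorem analyticAt_eulerDeriv (hf : AnalyticAt 𝕜 f x) : AnalyticAt 𝕜 (eulerDeriv f) x :=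
  analyticAt_id.mul hf.deriv

theorem analyticAt_eulerWronskian (hf : AnalyticAt 𝕜 f x) (hg : AnalyticAt 𝕜 g x) :
    AnalyticAt 𝕜 (eulerWronskian f g) x :=
  (hf.mul (analyticAt_eulerDeriv hg)).sub (hg.mul (analyticAt_eulerDeriv hf))

theorem eulerDeriv_eulerWronskian (hf : AnalyticAt 𝕜 f x) (hg : AnalyticAt 𝕜 g x) :
    eulerDeriv (eulerWronskian f g) x =
      f x * eulerDeriv (eulerDeriv g) x - g x * eulerDeriv (eulerDeriv f) x := by
  have hf₁ := (analyticAt_eulerDeriv hf).differentiableAt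
  have hg₁ := (analyticAt_eulerDeriv hg).differentiableAt
  replace hf := hf.differentiableAt
  replace hg := hg.differentiableAt
  unfold eulerWronskian
  rw [eulerDeriv_sub (hf.fun_mul hg₁) (hg.fun_mul hf₁), eulerDeriv_mul hf hg₁,
    eulerDeriv_mul hg hf₁]
  ring

theorem analyticAt_iteratedDeriv (hf : AnalyticAt 𝕜 f x) (n : ℕ) :
    AnalyticAt 𝕜 (iteratedDeriv n f) x := by
  rw [iteratedDeriv_eq_iterate]
  exact hf.iterated_deriv n

theorem eulerDeriv_pow_mul_iteratedDeriv (hf : AnalyticAt 𝕜 f x) (m n : ℕ) :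
    eulerDeriv (fun y => y ^ m * iteratedDeriv n f y) x =
      m * (x ^ m * iteratedDeriv n f x) + x ^ (m + 1) * iteratedDeriv (n + 1) f x := by
  rw [eulerDeriv_mul (by fun_prop) (analyticAt_iteratedDeriv hf n).differentiableAt,
    eulerDeriv_pow_id, eulerDeriv, ← iteratedDeriv_succ]
  ring

theorem eulerDeriv_eulerDeriv (hf : AnalyticAt 𝕜 f x) : eulerDeriv (eulerDeriv f) x =
    x ^ 1 * iteratedDeriv 1 f x + x ^ 2 * iteratedDeriv 2 f x := by
  simpa only [pow_one, iteratedDeriv_one, Nat.cast_one, one_mul] using!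
    eulerDeriv_pow_mul_iteratedDeriv hf 1 1

theorem eulerDeriv_eulerDeriv_eulerDeriv (hf : AnalyticAt 𝕜 f x) :
    eulerDeriv (eulerDeriv (eulerDeriv f)) x = x ^ 1 * iteratedDeriv 1 f x +
      3 * x ^ 2 * iteratedDeriv 2 f x + x ^ 3 * iteratedDeriv 3 f x := by
  have hd : ∀ n, DifferentiableAt 𝕜 (fun y => y ^ n * iteratedDeriv n f y) x := fun n =>
    (differentiableAt_pow n).fun_mul (analyticAt_iteratedDeriv hf n).differentiableAt
  rw [eulerDeriv_congr (hf.eventually_analyticAt.mono fun y hy => eulerDeriv_eulerDeriv hy),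
    eulerDeriv_add (hd 1) (hd 2), eulerDeriv_pow_mul_iteratedDeriv hf,
    eulerDeriv_pow_mul_iteratedDeriv hf]
  push_cast
  ring

end EulerDeriv

namespace IsThetaOfWeight

variable {q : ℂ} {k : ℕ} {f g : ℂ → ℂ} {x : ℂ}

theorem analyticAt (hf : IsThetaOfWeight q k f) (hx : x ≠ 0) : AnalyticAt ℂ f x :=
  hf.differentiableOn.analyticAt (isOpen_compl_singleton.mem_nhds hx)

theorem eulerDeriv_mul_left (hf : IsThetaOfWeight q k f) (hx : x ≠ 0) :
    eulerDeriv f (q * x) = (q * x) ^ k * (eulerDeriv f x + k * f x) :=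
  eulerDeriv_map_mul (hf.analyticAt hx).differentiableAt
    ((eventually_ne_nhds hx).mono hf.map_mul)

theorem eulerDeriv_eulerDeriv_mul_left (hf : IsThetaOfWeight q k f) (hx : x ≠ 0) :
    eulerDeriv (eulerDeriv f) (q * x) =
      (q * x) ^ k * (eulerDeriv (eulerDeriv f) x + 2 * k * eulerDeriv f x + k ^ 2 * f x) := by
  have hf₀ := (hf.analyticAt hx).differentiableAt
  have hf₁ := (analyticAt_eulerDeriv (hf.analyticAt hx)).differentiableAt
  rw [eulerDeriv_map_mul (hf₁.fun_add (hf₀.const_mul (k : ℂ)))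
      ((eventually_ne_nhds hx).mono fun y hy => hf.eulerDeriv_mul_left hy),
    eulerDeriv_add hf₁ (hf₀.const_mul _), eulerDeriv_const_mul]
  ring

protected theorem eulerWronskian (hf : IsThetaOfWeight q k f) (hg : IsThetaOfWeight q k g) :
    IsThetaOfWeight q (2 * k) (eulerWronskian f g) where
  differentiableOn _ hx := (analyticAt_eulerWronskian (hf.analyticAt hx)
    (hg.analyticAt hx)).differentiableAt.differentiableWithinAt
  map_mul x hx := by
    simp only [eulerWronskian, hf.map_mul x hx, hg.map_mul x hx, hf.eulerDeriv_mul_left hx,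
      hg.eulerDeriv_mul_left hx]
    ring

theorem eulerWronskian_eulerDeriv (hf : IsThetaOfWeight q k f) :
    IsThetaOfWeight q (2 * k) (eulerWronskian f (eulerDeriv f)) where
  differentiableOn _ hx := (analyticAt_eulerWronskian (hf.analyticAt hx)
    (analyticAt_eulerDeriv (hf.analyticAt hx))).differentiableAt.differentiableWithinAt
  map_mul x hx := by
    simp only [eulerWronskian, hf.map_mul x hx, hf.eulerDeriv_mul_left hx,
      hf.eulerDeriv_eulerDeriv_mul_left hx]
    ring

end IsThetaOfWeight

theorem eval_aeval_eq_eval {σ τ R : Type*} [CommSemiring R] (v : τ → R)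
    (φ : σ → MvPolynomial τ R) (Q : MvPolynomial σ R) :
    eval v (aeval φ Q) = eval (fun i => eval v (φ i)) Q := by
  have hC : (eval v).comp C = RingHom.id R := RingHom.ext fun r => eval_C r
  rw [map_aeval, algebraMap_eq, hC, coe_eval₂Hom, eval₂_id]

theorem algebraicIndependent_of_forall_exists_eval_eq {σ τ R : Type*} [CommRing R] [IsDomain R]
    [Infinite R] {D : MvPolynomial σ R} (hD : D ≠ 0) {φ : σ → MvPolynomial τ R}
    (h : ∀ y, eval y D ≠ 0 → ∃ v, ∀ i, eval v (φ i) = y i) : AlgebraicIndependent R φ := by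
  rw [algebraicIndependent_iff]
  intro Q hQ
  suffices hQD : Q * D = 0 from (mul_eq_zero.1 hQD).resolve_right hD
  refine MvPolynomial.funext fun y => ?_
  rw [map_mul, map_zero, mul_eq_zero, or_iff_not_imp_right]
  intro hy
  obtain ⟨v, hv⟩ := h y hy
  rw [← funext hv, ← eval_aeval_eq_eval, hQ, map_zero]

/-- The polynomials expressing `f, δ f, δ² f, δ³ f`, where `δ = x d/dx`, in terms of `x` and the
derivatives of `f`: the variable `X 0` stands for `x`, and `X (j + 1)` for the `j`-th derivative. -/
noncomputable def eulerJetPoly : Fin 4 → MvPolynomial (Fin 5) ℂ :=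
  ![X 1,
    X 0 * X 2,
    X 0 * X 2 + X 0 ^ 2 * X 3,
    X 0 * X 2 + 3 * X 0 ^ 2 * X 3 + X 0 ^ 3 * X 4]

theorem algebraicIndependent_eulerJetPoly : AlgebraicIndependent ℂ eulerJetPoly := by
  refine algebraicIndependent_of_forall_exists_eval_eq one_ne_zero fun y _ =>
    ⟨![1, y 0, y 1, y 2 - y 1, y 3 - 3 * y 2 + 2 * y 1], fun i => ?_⟩
  fin_cases i <;> simp [eulerJetPoly]
  ring

theorem eval_eulerJetPoly {f : ℂ → ℂ} {x : ℂ} (hf : AnalyticAt ℂ f x) (i : Fin 4) :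
    eval (fun j : Fin 5 => if (j : ℕ) = 0 then x else iteratedDeriv (j - 1) f x) (eulerJetPoly i) =
      eulerDeriv^[i] f x := by
  fin_cases i
  · simp [eulerJetPoly]
  · simp [eulerJetPoly, eulerDeriv]
  · simp [eulerJetPoly, eulerDeriv_eulerDeriv hf]
  · simp [eulerJetPoly, eulerDeriv_eulerDeriv_eulerDeriv hf]

/-- Three functions of weight `4 k` built from a theta function `f` of weight `k`. The Wronskian
`F` of `f` and `δ f` is the numerator of `δ² log f = F / f²`; the third function is the numerator of
`δ³ log f`, over the denominator `f⁴`. The powers equalise the weights. -/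
noncomputable def thetaTriple (f : ℂ → ℂ) : Fin 3 → ℂ → ℂ :=
  ![fun x => f x ^ 4,
    fun x => eulerWronskian f (eulerDeriv f) x ^ 2,
    eulerWronskian (fun x => f x ^ 2) (eulerWronskian f (eulerDeriv f))]

/-- The polynomials expressing `thetaTriple f` in terms of `f, δ f, δ² f, δ³ f`. -/
noncomputable def thetaTriplePoly : Fin 3 → MvPolynomial (Fin 4) ℂ :=
  ![X 0 ^ 4,
    (X 0 * X 2 - X 1 ^ 2) ^ 2,
    X 0 ^ 2 * (X 0 * X 3 - X 1 * X 2) - 2 * X 0 * X 1 * (X 0 * X 2 - X 1 ^ 2)]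

theorem algebraicIndependent_thetaTriplePoly : AlgebraicIndependent ℂ thetaTriplePoly := by
  refine algebraicIndependent_of_forall_exists_eval_eq (X_ne_zero 0) fun y hy => ?_
  rw [eval_X] at hy
  obtain ⟨r, hr⟩ := IsAlgClosed.exists_pow_nat_eq (y 0) four_pos
  obtain ⟨s, hs⟩ := IsAlgClosed.exists_pow_nat_eq (y 1) two_pos
  have hr0 : r ≠ 0 := by
    rintro rfl
    exact hy (by rw [← hr, zero_pow four_ne_zero])
  refine ⟨![r, 0, s / r, y 2 / r ^ 3], fun i => ?_⟩
  fin_cases i <;> simp [thetaTriplePoly, ← hr, ← hs] <;> field_simp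

theorem eval_thetaTriplePoly {f : ℂ → ℂ} {x : ℂ} (hf : AnalyticAt ℂ f x) (i : Fin 3) :
    eval (fun j : Fin 4 => eulerDeriv^[j] f x) (thetaTriplePoly i) = thetaTriple f i x := by
  fin_cases i
  · simp [thetaTriplePoly, thetaTriple]
  · simp [thetaTriplePoly, thetaTriple, eulerWronskian, sq (eulerDeriv f x)]
  · have hW := eulerDeriv_eulerWronskian hf (analyticAt_eulerDeriv hf)
    have hsq := eulerDeriv_pow hf.differentiableAt 2
    change _ = f x ^ 2 * eulerDeriv (eulerWronskian f (eulerDeriv f)) x -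
      eulerWronskian f (eulerDeriv f) x * eulerDeriv (fun y => f y ^ 2) x
    rw [hW, hsq]
    simp [thetaTriplePoly, eulerWronskian]
    ring

theorem IsThetaOfWeight.thetaTriple {q : ℂ} {k : ℕ} {f : ℂ → ℂ} (hf : IsThetaOfWeight q k f)
    (i : Fin 3) : IsThetaOfWeight q (4 * k) (thetaTriple f i) := by
  have hF := hf.eulerWronskian_eulerDeriv
  fin_cases i
  · exact mul_comm k 4 ▸ hf.pow 4
  · exact (by ring : 2 * k * 2 = 4 * k) ▸ hF.pow 2
  · exact (by ring : 2 * (2 * k) = 4 * k) ▸ (mul_comm k 2 ▸ hf.pow 2).eulerWronskian hF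

theorem thetaQ_differentially_algebraic_general {q : ℂ} (hq : q ≠ 0) {k : ℕ} (hk : 0 < k)
    {f : ℂ → ℂ} (hf : IsThetaOfWeight q k f) :
    ∃ (n : ℕ) (P : MvPolynomial (Fin (n + 2)) ℂ), P ≠ 0 ∧
      ∀ x : ℂ, x ≠ 0 →
        MvPolynomial.eval
          (fun i : Fin (n + 2) =>
            if (i : ℕ) = 0 then x else iteratedDeriv ((i : ℕ) - 1) f x) P = 0 := by
  obtain ⟨Q, hQ, hrel⟩ := IsThetaOfWeight.exists_algebraic_relation hq (by positivity)
    hf.thetaTriple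
  refine ⟨3, aeval eulerJetPoly (aeval thetaTriplePoly Q), ?_, fun x hx => ?_⟩
  · exact fun h => hQ (algebraicIndependent_thetaTriplePoly.eq_zero_of_aeval_eq_zero _
      (algebraicIndependent_eulerJetPoly.eq_zero_of_aeval_eq_zero _ h))
  · simp only [eval_aeval_eq_eval, eval_eulerJetPoly (hf.analyticAt hx),
      eval_thetaTriplePoly (hf.analyticAt hx)]
    exact hrel x hx

section ThetaQ

variable {q : ℂ}

theorem thetaQ_mul_left (hq : q ≠ 0) {x : ℂ} (hx : x ≠ 0) :
    thetaQ q (q * x) = q * x * thetaQ q x := by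
  rw [thetaQ, thetaQ, ← tsum_mul_left, ← (Equiv.addRight (1 : ℤ)).tsum_eq]
  refine tsum_congr fun n => ?_
  have he : -((n + 1) * (n + 1 - 1)) / 2 + (n + 1) = -(n * (n - 1)) / 2 + 1 := by
    rw [show -((n + 1) * (n + 1 - 1)) = -(n * (n - 1)) + -n * 2 by ring,
      Int.add_mul_ediv_right _ _ two_ne_zero]
    ring
  rw [Equiv.coe_addRight, mul_zpow, ← mul_assoc, ← zpow_add₀ hq, he, zpow_add_one₀ hq,
    zpow_add_one₀ hx]
  ring

theorem thetaQ_exp (hq : q ≠ 0) (w : ℂ) :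
    thetaQ q (cexp w) = jacobiTheta₂ ((log q / 2 + w) / (2 * π * I)) (log q / (2 * π) * I) := by
  refine tsum_congr fun n => ?_
  have he : ((-(n * (n - 1)) / 2 : ℤ) : ℂ) = -(n * (n - 1)) / 2 := by
    rw [Int.cast_div (Int.even_mul_pred_self n).two_dvd.neg_right (by norm_num)]
    push_cast
    ring
  have hexp : -(n * (n - 1)) / 2 * log q + n * w =
      2 * π * I * n * ((log q / 2 + w) / (2 * π * I)) + π * I * n ^ 2 * (log q / (2 * π) * I) := by
    field_simp
    rw [I_sq]
    ring
  rw [jacobiTheta₂_term, ← hexp, Complex.exp_add, ← he, Complex.exp_int_mul, Complex.exp_int_mul,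
    exp_log hq]

theorem im_log_div_two_pi_mul_I_pos (hq : 1 < ‖q‖) : 0 < (log q / (2 * π) * I).im := by
  rw [mul_I_im, ← ofReal_ofNat, ← ofReal_mul, div_ofReal_re, log_re]
  exact div_pos (Real.log_pos hq) two_pi_pos

theorem differentiable_thetaQ_exp (hq : 1 < ‖q‖) : Differentiable ℂ fun w => thetaQ q (cexp w) := by
  have hq0 : q ≠ 0 := norm_pos_iff.1 (one_pos.trans hq)
  simp only [thetaQ_exp hq0]
  exact fun w => (differentiableAt_jacobiTheta₂_fst _ (im_log_div_two_pi_mul_I_pos hq)).comp w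
    (by fun_prop)

theorem differentiableOn_of_differentiable_comp_exp {f : ℂ → ℂ}
    (hf : Differentiable ℂ fun w => f (cexp w)) : DifferentiableOn ℂ f {0}ᶜ := by
  intro x₀ (hx₀ : x₀ ≠ 0)
  have hlog : DifferentiableAt ℂ (fun x => log x₀ + log (x / x₀)) x₀ := by
    refine .const_add _ (.clog (by fun_prop) ?_)
    rw [div_self hx₀]
    exact one_mem_slitPlane
  refine ((hf _).comp x₀ hlog).congr_of_eventuallyEq ?_ |>.differentiableWithinAt
  filter_upwards [eventually_ne_nhds hx₀] with x hx
  rw [Function.comp_apply, Complex.exp_add, exp_log hx₀, exp_log (div_ne_zero hx hx₀),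
    mul_div_cancel₀ _ hx₀]

theorem isThetaOfWeight_thetaQ (hq : 1 < ‖q‖) : IsThetaOfWeight q 1 (thetaQ q) where
  differentiableOn := differentiableOn_of_differentiable_comp_exp (differentiable_thetaQ_exp hq)
  map_mul x hx := by rw [thetaQ_mul_left (norm_pos_iff.1 (one_pos.trans hq)) hx, pow_one]

end ThetaQ

/-- For `q ∈ ℂ` with `|q| > 1`, the Jacobi theta function is differentially algebraic over
`ℂ(x)`: there are `n : ℕ` and a nonzero polynomial `P` in `n + 2` variables over `ℂ` such
that `P(x, Θ(x), Θ'(x), …, Θ⁽ⁿ⁾(x)) = 0` for every `x ≠ 0`. -/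
theorem thetaQ_differentially_algebraic (q : ℂ) (hq : 1 < ‖q‖) :
    ∃ (n : ℕ) (P : MvPolynomial (Fin (n + 2)) ℂ), P ≠ 0 ∧
      ∀ x : ℂ, x ≠ 0 →
        MvPolynomial.eval
          (fun i : Fin (n + 2) =>
            if (i : ℕ) = 0 then x else iteratedDeriv ((i : ℕ) - 1) (thetaQ q) x) P = 0 :=
  thetaQ_differentially_algebraic_general (norm_pos_iff.1 (one_pos.trans hq)) one_pos
    (isThetaOfWeight_thetaQ hq)
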